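/- Every infinite-dimensional Banach space contains an infinite-dimensional closed subspace with a Schauder basis (e_n) such that [e_n] is either ω-tight or ω²-minimal. -/

import Mathlib

open Filter Topology

namespace Rosendal

variable {𝒲 : Type} [NormedAddCommGroup 𝒲] [NormedSpace ℝ 𝒲]

/-- `(e n)` is a Schauder basis of the Banach space `𝒲`: every vector has a unique
representation as a norm-convergent series `∑ a n • e n`. -/
def IsSchauderBasis (e : ℕ → 𝒲) : Prop :=
  ∀ x : 𝒲, ∃! a : ℕ → ℝ,
    Tendsto (fun N => ∑ i ∈ Finset.range N, a i • e i) atTop (𝓝 x)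

/-- `x` is a linear combination of the vectors `b i`, `i ∈ s`. -/
def SuppIn (b : ℕ → 𝒲) (x : 𝒲) (s : Finset ℕ) : Prop :=
  ∃ a : ℕ → ℝ, x = ∑ i ∈ s, a i • b i

/-- `(y n)` is a block sequence with respect to the basic sequence `(b n)`: a sequence of
nonzero finite linear combinations of the `b i` with successive supports. -/
def IsBlockSeq (b : ℕ → 𝒲) (y : ℕ → 𝒲) : Prop :=
  (∀ n, y n ≠ 0) ∧
  ∃ D : ℕ → Finset ℕ, (∀ n, SuppIn b (y n) (D n)) ∧
    ∀ n, ∀ i ∈ D n, ∀ j ∈ D (n + 1), i < j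

/-- The closed linear span of a set. -/
noncomputable def closedSpan (S : Set 𝒲) : Submodule ℝ 𝒲 :=
  (Submodule.span ℝ S).topologicalClosure

/-- `(x i)_{i<k} ∼_K (y i)_{i<k}`:
`(1/K)‖∑ a i • x i‖ ≤ ‖∑ a i • y i‖ ≤ K‖∑ a i • x i‖` for all scalars. -/
def SeqEquiv (K : ℝ) (k : ℕ) (x y : ℕ → 𝒲) : Prop :=
  ∀ a : ℕ → ℝ,
    (1 / K) * ‖∑ i ∈ Finset.range k, a i • x i‖ ≤ ‖∑ i ∈ Finset.range k, a i • y i‖ ∧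
    ‖∑ i ∈ Finset.range k, a i • y i‖ ≤ K * ‖∑ i ∈ Finset.range k, a i • x i‖

/-- The tree `T((x n), Y, K)` of finite sequences `(y 0, …, y k)` of vectors of `Y` that are
`K`-equivalent to `(x 0, …, x k)`, ordered by end-extension. -/
def embTree (x : ℕ → 𝒲) (Y : Set 𝒲) (K : ℝ) : Set (List 𝒲) :=
  {l | (∀ v ∈ l, v ∈ Y) ∧ SeqEquiv K l.length (fun i => l.getD i 0) x}

open Classical in
/-- The rank of a tree of finite sequences: if the proper end-extension relation is
well-founded (equivalently, for trees, there is no infinite branch), this is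
`sup { ρ(s) + 1 : s ∈ T }` where `ρ` is the usual rank function; otherwise it is `∞ = ⊤`. -/
noncomputable def treeRank (T : Set (List 𝒲)) : WithTop Ordinal :=
  if h : WellFounded (fun t s : T => s.val <+: t.val ∧ s.val ≠ t.val) then
    ((⨆ s : T, Order.succ ((h.apply s).rank) : Ordinal) : WithTop Ordinal)
  else ⊤

open Classical in
/-- The embeddability index `Emb((x n), Y) = sup_{K ≥ 1} rank T((x n), Y, K)`. -/
noncomputable def embIndex (x : ℕ → 𝒲) (Y : Set 𝒲) : WithTop Ordinal :=
  if ∃ K : ℝ, 1 ≤ K ∧ treeRank (embTree x Y K) = ⊤ then ⊤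
  else ((sSup {o : Ordinal | ∃ K : ℝ, 1 ≤ K ∧
      (o : WithTop Ordinal) = treeRank (embTree x Y K)} : Ordinal) : WithTop Ordinal)

/-- `(I m)` is a sequence of successive nonempty finite intervals `I 0 < I 1 < …` of `ℕ`. -/
def IntervalSeq (I : ℕ → Finset ℕ) : Prop :=
  (∀ m, ∃ a b : ℕ, a ≤ b ∧ I m = Finset.Icc a b) ∧
  ∀ m, ∀ i ∈ I m, ∀ j ∈ I (m + 1), i < j

/-- The closed subspace `[b n : n ∉ ⋃_{m ∈ A} I m]`. -/
noncomputable def residualSpace (b : ℕ → 𝒲) (I : ℕ → Finset ℕ) (A : Set ℕ) :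
    Submodule ℝ 𝒲 :=
  closedSpan {v | ∃ n : ℕ, (∀ m ∈ A, n ∉ I m) ∧ v = b n}

/-- The space `[b n]` with its basis `(b n)` is `α`-tight. -/
def IsAlphaTight (b : ℕ → 𝒲) (α : Ordinal) : Prop :=
  ∀ y : ℕ → 𝒲, IsBlockSeq b y →
    ∃ I : ℕ → Finset ℕ, IntervalSeq I ∧
      ∀ A : Set ℕ, A.Infinite →
        embIndex y (residualSpace b I A : Set 𝒲) ≤ (α : WithTop Ordinal)

/-- The space `[b n]` with its basis `(b n)` is `α`-minimal: every block subspace `[z n]`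
`α`-embeds into every infinite-dimensional subspace `Y ⊆ [b n]`. -/
def IsAlphaMinimal (b : ℕ → 𝒲) (α : Ordinal) : Prop :=
  ∀ z : ℕ → 𝒲, IsBlockSeq b z →
    ∀ Y : Submodule ℝ 𝒲, (Y : Set 𝒲) ⊆ (closedSpan (Set.range b) : Set 𝒲) →
      ¬FiniteDimensional ℝ Y →
        (α : WithTop Ordinal) ≤ embIndex z (Y : Set 𝒲)

/-- `X` embeds isomorphically into `Y` (as an isomorphism onto its image). -/
def LinIsoEmbeds (X Y : Submodule ℝ 𝒲) : Prop :=
  ∃ T : X →ₗ[ℝ] 𝒲, (∀ v : X, T v ∈ Y) ∧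
    ∃ c C : ℝ, 0 < c ∧ ∀ v : X, c * ‖v‖ ≤ ‖T v‖ ∧ ‖T v‖ ≤ C * ‖v‖

/-- `X` is a minimal space: it embeds isomorphically into every infinite-dimensional
closed subspace of itself. -/
def IsMinimalSpace (X : Submodule ℝ 𝒲) : Prop :=
  ∀ Y : Submodule ℝ 𝒲, Y ≤ X → IsClosed (Y : Set 𝒲) → ¬FiniteDimensional ℝ Y →
    LinIsoEmbeds X Y

/-- `F` embeds into `Y` with constant `K`. -/
def KEmbeds (K : ℝ) (F Y : Submodule ℝ 𝒲) : Prop :=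
  ∃ T : F →ₗ[ℝ] 𝒲, (∀ v : F, T v ∈ Y) ∧
    ∀ v : F, (1 / K) * ‖v‖ ≤ ‖T v‖ ∧ ‖T v‖ ≤ K * ‖v‖

end Rosendal

namespace Rosendal

variable {𝒲 : Type} [NormedAddCommGroup 𝒲] [NormedSpace ℝ 𝒲]

/-- `(b n)` is a Schauder basis of its closed linear span. -/
def IsBasicSeq (b : ℕ → 𝒲) : Prop :=
  ∀ x ∈ closedSpan (Set.range b), ∃! a : ℕ → ℝ,
    Filter.Tendsto (fun N => ∑ i ∈ Finset.range N, a i • b i) Filter.atTop (𝓝 x)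

/-!
Stabilise: there is a basic sequence `(x n)` such that any finite sequence `K`-embedding into
every tail `[x m : m ≥ N]` embeds, with constant `8 * K`, into every infinite-dimensional subspace.

If for some block sequence `y` and some `K` all prefixes of `y` `K`-embed into all tails, then
`[y n]` is `ω²`-minimal. Indeed, by Mazur's lemma an embedded prefix of a block sequence of `y` can
be continued inside `Y` by arbitrarily many vectors, with a new constant that depends only on the
old one and not on the number of vectors; so each increase of the constant adds `ω` to the rank.

Otherwise every block sequence `y` and every `K` admit a prefix of `y` that does not `K`-embed into
some tail. Exchanging `a` pairs of basis vectors is an isomorphism with constant depending on `a`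
only, so the tail may be replaced by `[x m : m ∉ I]` for an interval `I` beyond `a`. Choosing
such `I j` successively for `K = j + 1`, a subspace avoiding infinitely many `I j` contains, for
each `K`, only embedded prefixes of `y` of bounded length.
-/

section InfiniteDimensional

variable {R M : Type*} [Ring R] [AddCommGroup M] [Module R M] {Y F T : Submodule R M}

lemma not_finite_inf_of_fg_map_mkQ (hY : ¬Module.Finite R Y) (h : (Y.map T.mkQ).FG) :
    ¬Module.Finite R (Y ⊓ T : Submodule R M) := fun hYT =>
  hY <| Module.Finite.iff_fg.2 <| Submodule.fg_of_fg_map_of_fg_inf_ker T.mkQ h <| by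
    rw [Submodule.ker_mkQ]
    exact Module.Finite.iff_fg.1 hYT

variable [IsNoetherianRing R]

lemma not_finite_inf_of_coFG (hY : ¬Module.Finite R Y) (hT : T.CoFG) :
    ¬Module.Finite R (Y ⊓ T : Submodule R M) := by
  have : Module.Finite R (M ⧸ T) := hT
  exact not_finite_inf_of_fg_map_mkQ hY (IsNoetherian.noetherian _)

lemma not_finite_inf_of_le_sup (hY : ¬Module.Finite R Y) (hF : F.FG) (h : Y ≤ F ⊔ T) :
    ¬Module.Finite R (Y ⊓ T : Submodule R M) := by
  refine not_finite_inf_of_fg_map_mkQ hY ?_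
  have hle : Y.map T.mkQ ≤ F.map T.mkQ := by
    refine (Submodule.map_mono h).trans ?_
    rw [Submodule.map_sup, Submodule.mkQ_map_self, sup_bot_eq]
  exact (hF.map T.mkQ).of_le hle

end InfiniteDimensional

section Mazur

variable {𝕜 E : Type*} [RCLike 𝕜] [NormedAddCommGroup E] [NormedSpace 𝕜 E]

lemma exists_finset_norming (F : Submodule 𝕜 E) [FiniteDimensional 𝕜 F] {C : ℝ} (hC : 1 < C) :
    ∃ t : Finset (StrongDual 𝕜 E), (∀ g ∈ t, ‖g‖ ≤ 1) ∧
      ∀ f ∈ F, ‖f‖ = 1 → ∃ g ∈ t, 1 ≤ C * ‖g f‖ := by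
  classical
  have := FiniteDimensional.proper_rclike 𝕜 F
  have hC0 : 0 < C := one_pos.trans hC
  obtain ⟨s, hs, hsfin, hcover⟩ :=
    (isCompact_sphere (0 : F) 1).finite_cover_balls (sub_pos.2 (inv_lt_one_of_one_lt₀ hC))
  choose g hg_norm hg_self using fun v : F => exists_dual_vector'' 𝕜 (v : E)
  refine ⟨hsfin.toFinset.image g, Finset.forall_mem_image.2 fun v _ => hg_norm v,
    fun f hf hf1 => ?_⟩
  obtain ⟨v, hv, hfv⟩ := Set.mem_iUnion₂.1 <|
    hcover (show (⟨f, hf⟩ : F) ∈ Metric.sphere 0 1 by simpa using hf1)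
  refine ⟨g v, Finset.mem_image_of_mem g (hsfin.mem_toFinset.2 hv), ?_⟩
  have hv1 : ‖g v v‖ = 1 := by simpa [hg_self] using hs hv
  have hdist : ‖g v (v - f)‖ ≤ 1 - C⁻¹ := by
    rw [mem_ball_iff_norm'] at hfv
    exact ((g v).le_of_opNorm_le (hg_norm v) _).trans (by simpa using hfv.le)
  have hgf : C⁻¹ ≤ ‖g v f‖ := by
    have := norm_sub_norm_le (g v v) (g v f)
    rw [map_sub] at hdist
    linarith
  rwa [inv_le_iff_one_le_mul₀' hC0] at hgf

lemma exists_coFG_norm_le_mul_norm_add (F : Submodule 𝕜 E) [FiniteDimensional 𝕜 F] {C : ℝ}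
    (hC : 1 < C) :
    ∃ G : Submodule 𝕜 E, G.CoFG ∧ ∀ f ∈ F, ∀ z ∈ G, ‖f‖ ≤ C * ‖f + z‖ := by
  obtain ⟨t, ht_norm, ht⟩ := exists_finset_norming F hC
  refine ⟨LinearMap.ker (LinearMap.pi fun g : t => (g : E →ₗ[𝕜] 𝕜)), Submodule.CoFG.ker _,
    fun f hf z hz => ?_⟩
  have hC0 : 0 < C := one_pos.trans hC
  have hz (g) (hg : g ∈ t) : g z = 0 := congrFun (LinearMap.mem_ker.1 hz) ⟨g, hg⟩
  rcases eq_or_ne f 0 with rfl | hf0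
  · simpa using mul_nonneg hC0.le (norm_nonneg z)
  obtain ⟨g, hg, hgf⟩ := ht _ (F.smul_mem ((‖f‖ : 𝕜)⁻¹) hf) (norm_smul_inv_norm hf0)
  calc ‖f‖ ≤ C * ‖g f‖ := by
        rw [map_smul, norm_smul, norm_inv, RCLike.norm_coe_norm, ← div_eq_inv_mul, mul_div_assoc',
          one_le_div (norm_pos_iff.2 hf0)] at hgf
        exact hgf
    _ = C * ‖g (f + z)‖ := by rw [map_add, hz g hg, add_zero]
    _ ≤ C * ‖f + z‖ := by
        gcongr
        exact (g.le_of_opNorm_le (ht_norm g hg) _).trans_eq (one_mul _)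

end Mazur

section BasisConstant

lemma linearCombination_eq_sum_range {R M : Type*} [Semiring R] [AddCommMonoid M] [Module R M]
    (b : ℕ → M) {l : ℕ →₀ R} {n : ℕ} (hl : l.support ⊆ Finset.range n) :
    Finsupp.linearCombination R b l = ∑ i ∈ Finset.range n, l i • b i := by
  rw [Finsupp.linearCombination_apply,
    Finsupp.sum_of_support_subset l hl _ fun i _ => zero_smul R (b i)]

lemma not_finite_of_linearIndependent_of_mem {R M ι : Type*} [Ring R] [Nontrivial R]
    [AddCommGroup M] [Module R M] [StrongRankCondition R]
    [Infinite ι] {b : ι → M} (hb : LinearIndependent R b) {S : Submodule R M}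
    (hS : ∀ i, b i ∈ S) : ¬Module.Finite R S := fun _ =>
  Module.Finite.not_linearIndependent_of_infinite (fun i => (⟨b i, hS i⟩ : S))
    (LinearIndependent.of_comp S.subtype hb)

variable {𝕜 E : Type*} [RCLike 𝕜] [NormedAddCommGroup E] [NormedSpace 𝕜 E]

variable (𝕜) in
/-- The basis constant of the sequence `b` is at most `C`, i.e. the partial sum projections
`∑ i < n, a i • b i ↦ ∑ i < m, a i • b i` all have norm at most `C`. -/
def BasisConstLE (C : ℝ) (b : ℕ → E) : Prop :=
  ∀ (a : ℕ → 𝕜) ⦃m n : ℕ⦄, m ≤ n →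
    ‖∑ i ∈ Finset.range m, a i • b i‖ ≤ C * ‖∑ i ∈ Finset.range n, a i • b i‖

namespace BasisConstLE

variable {C : ℝ} {b : ℕ → E}

lemma one_le (h : BasisConstLE 𝕜 C b) (hb : b 0 ≠ 0) : 1 ≤ C := by
  have h01 := h 1 (le_refl 1)
  rw [Finset.sum_range_one, Pi.one_apply, one_smul] at h01
  exact le_of_mul_le_mul_right ((one_mul _).trans_le h01) (norm_pos_iff.2 hb)

lemma norm_le_of_mem_span (h : BasisConstLE 𝕜 C b) {N : ℕ} {f g : E}
    (hf : f ∈ Submodule.span 𝕜 (b '' Set.Iio N)) (hg : g ∈ Submodule.span 𝕜 (b '' Set.Ici N)) :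
    ‖f‖ ≤ C * ‖f + g‖ := by
  obtain ⟨l, hl, rfl⟩ := (Finsupp.mem_span_image_iff_linearCombination 𝕜).1 hf
  obtain ⟨l', hl', rfl⟩ := (Finsupp.mem_span_image_iff_linearCombination 𝕜).1 hg
  rw [Finsupp.mem_supported] at hl hl'
  obtain ⟨n, hn⟩ := (l + l').support.exists_nat_subset_range
  have hlN : Finsupp.linearCombination 𝕜 b l = ∑ i ∈ Finset.range N, (l + l') i • b i := by
    rw [linearCombination_eq_sum_range b fun i hi => Finset.mem_range.2 (hl hi)]
    refine Finset.sum_congr rfl fun i hi => ?_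
    have : l' i = 0 := Finsupp.notMem_support_iff.1 fun hi' =>
      (Finset.mem_range.1 hi).not_ge (hl' hi')
    rw [Finsupp.add_apply, this, add_zero]
  rw [← map_add, linearCombination_eq_sum_range b
    (hn.trans (Finset.range_subset_range.2 (le_max_left n N))), hlN]
  exact h _ (le_max_right n N)

lemma norm_coeff_mul_norm_le (h : BasisConstLE 𝕜 C b) (l : ℕ →₀ 𝕜) (i : ℕ) :
    ‖l i‖ * ‖b i‖ ≤ 2 * C * ‖Finsupp.linearCombination 𝕜 b l‖ := by
  obtain ⟨n, hn⟩ := (insert i l.support).exists_nat_subset_range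
  have hin : i < n := Finset.mem_range.1 (hn (Finset.mem_insert_self i _))
  rw [linearCombination_eq_sum_range b ((Finset.subset_insert i _).trans hn), ← norm_smul]
  calc ‖l i • b i‖
      = ‖∑ j ∈ Finset.range (i + 1), l j • b j - ∑ j ∈ Finset.range i, l j • b j‖ := by
        rw [Finset.sum_range_succ, add_sub_cancel_left]
    _ ≤ ‖∑ j ∈ Finset.range (i + 1), l j • b j‖ + ‖∑ j ∈ Finset.range i, l j • b j‖ :=
        norm_sub_le _ _
    _ ≤ C * ‖∑ j ∈ Finset.range n, l j • b j‖ + C * ‖∑ j ∈ Finset.range n, l j • b j‖ :=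
        add_le_add (h l hin) (h l hin.le)
    _ = 2 * C * ‖∑ j ∈ Finset.range n, l j • b j‖ := by ring

lemma linearIndependent (h : BasisConstLE 𝕜 C b) (hb : ∀ n, b n ≠ 0) :
    LinearIndependent 𝕜 b := by
  refine linearIndependent_iff.2 fun l hl => Finsupp.ext fun i => ?_
  have hi := h.norm_coeff_mul_norm_le l i
  rw [hl, norm_zero, mul_zero] at hi
  exact norm_le_zero_iff.1 (nonpos_of_mul_nonpos_left hi (norm_pos_iff.2 (hb i)))

lemma exists_coordFunctional (h : BasisConstLE 𝕜 C b) (hb : ∀ n, b n ≠ 0) :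
    ∃ φ : ℕ → StrongDual 𝕜 E, (∀ i j, φ i (b j) = if i = j then 1 else 0) ∧
      ∀ i, ‖φ i‖ ≤ 2 * C / ‖b i‖ := by
  have hli := h.linearIndependent hb
  have hC : 0 ≤ 2 * C := mul_nonneg zero_le_two (zero_le_one.trans (h.one_le (hb 0)))
  have hbound (i : ℕ) (v : Submodule.span 𝕜 (Set.range b)) :
      ‖hli.repr v i‖ ≤ 2 * C / ‖b i‖ * ‖v‖ := by
    rw [div_mul_eq_mul_div, le_div_iff₀ (norm_pos_iff.2 (hb i))]
    simpa only [hli.linearCombination_repr, Submodule.coe_norm] using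
      h.norm_coeff_mul_norm_le (hli.repr v) i
  let ψ (i : ℕ) : StrongDual 𝕜 (Submodule.span 𝕜 (Set.range b)) :=
    LinearMap.mkContinuous (Finsupp.lapply i ∘ₗ (hli.repr : _ →ₗ[𝕜] ℕ →₀ 𝕜)) _ (hbound i)
  choose φ hφ_eq hφ_norm using fun i => exists_extension_norm_eq _ (ψ i)
  refine ⟨φ, fun i j => ?_, fun i => ?_⟩
  · rw [hφ_eq i ⟨b j, Submodule.subset_span ⟨j, rfl⟩⟩]
    change hli.repr _ i = _
    rw [hli.repr_eq_single j _ rfl, Finsupp.single_apply]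
    simp only [eq_comm]
  · rw [hφ_norm i]
    exact LinearMap.mkContinuous_norm_le _ (div_nonneg hC (norm_nonneg _)) _

end BasisConstLE

lemma map_sum_range_of_biorthogonal {b : ℕ → E} {φ : ℕ → StrongDual 𝕜 E}
    (hφ : ∀ i j, φ i (b j) = if i = j then 1 else 0) (a : ℕ → 𝕜) {i n : ℕ} (hi : i < n) :
    φ i (∑ j ∈ Finset.range n, a j • b j) = a i := by
  simp only [map_sum, map_smul, hφ, smul_eq_mul, mul_ite, mul_one, mul_zero, Finset.sum_ite_eq,
    Finset.mem_range, hi, if_true]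

lemma eventually_sum_coord_eq_of_mem_span {b : ℕ → E} {φ : ℕ → StrongDual 𝕜 E}
    (hφ : ∀ i j, φ i (b j) = if i = j then 1 else 0) {v : E}
    (hv : v ∈ Submodule.span 𝕜 (Set.range b)) :
    ∀ᶠ N in atTop, ∑ i ∈ Finset.range N, φ i v • b i = v := by
  obtain ⟨l, rfl⟩ := Finsupp.mem_span_range_iff_exists_finsupp.1 hv
  obtain ⟨n, hn⟩ := l.support.exists_nat_subset_range
  filter_upwards [eventually_ge_atTop n] with N hN
  have hl : (l.sum fun i a => a • b i) = ∑ i ∈ Finset.range N, l i • b i :=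
    linearCombination_eq_sum_range b (hn.trans (Finset.range_subset_range.2 hN))
  rw [hl]
  exact Finset.sum_congr rfl fun i hi => by
    rw [map_sum_range_of_biorthogonal hφ l (Finset.mem_range.1 hi)]

namespace BasisConstLE

variable {C : ℝ} {b : ℕ → E} {φ : ℕ → StrongDual 𝕜 E}

lemma norm_sum_coord_le (h : BasisConstLE 𝕜 C b)
    (hφ : ∀ i j, φ i (b j) = if i = j then 1 else 0) {v : E}
    (hv : v ∈ (Submodule.span 𝕜 (Set.range b)).topologicalClosure) (N : ℕ) :
    ‖∑ i ∈ Finset.range N, φ i v • b i‖ ≤ C * ‖v‖ := by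
  have hclosed : IsClosed {v | ‖∑ i ∈ Finset.range N, φ i v • b i‖ ≤ C * ‖v‖} :=
    isClosed_le (by fun_prop) (by fun_prop)
  refine closure_minimal (fun w hw => ?_) hclosed hv
  obtain ⟨n, hNn, hn⟩ :=
    ((eventually_ge_atTop N).and (eventually_sum_coord_eq_of_mem_span hφ hw)).exists
  exact (h (fun i => φ i w) hNn).trans_eq (by rw [hn])

lemma tendsto_sum_coord (h : BasisConstLE 𝕜 C b) (hb : b 0 ≠ 0)
    (hφ : ∀ i j, φ i (b j) = if i = j then 1 else 0) {v : E}
    (hv : v ∈ (Submodule.span 𝕜 (Set.range b)).topologicalClosure) :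
    Tendsto (fun N => ∑ i ∈ Finset.range N, φ i v • b i) atTop (𝓝 v) := by
  have hC : 0 < C + 1 := by linarith [h.one_le hb]
  rw [Metric.tendsto_nhds]
  intro ε hε
  obtain ⟨w, hw, hvw⟩ := Metric.mem_closure_iff.1 hv (ε / (C + 1)) (div_pos hε hC)
  rw [dist_eq_norm, lt_div_iff₀' hC] at hvw
  filter_upwards [eventually_sum_coord_eq_of_mem_span hφ hw] with N hN
  have hvw_mem : v - w ∈ (Submodule.span 𝕜 (Set.range b)).topologicalClosure :=
    sub_mem hv (Submodule.le_topologicalClosure _ hw)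
  calc dist (∑ i ∈ Finset.range N, φ i v • b i) v
      = ‖∑ i ∈ Finset.range N, φ i (v - w) • b i - (v - w)‖ := by
        simp only [map_sub, sub_smul, Finset.sum_sub_distrib, hN, dist_eq_norm]
        congr 1
        abel
    _ ≤ ‖∑ i ∈ Finset.range N, φ i (v - w) • b i‖ + ‖v - w‖ := norm_sub_le _ _
    _ ≤ C * ‖v - w‖ + ‖v - w‖ := by gcongr; exact h.norm_sum_coord_le hφ hvw_mem N
    _ = (C + 1) * ‖v - w‖ := by ring
    _ < ε := hvw

lemma existsUnique_tendsto_sum (h : BasisConstLE 𝕜 C b) (hb : ∀ n, b n ≠ 0) {v : E}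
    (hv : v ∈ (Submodule.span 𝕜 (Set.range b)).topologicalClosure) :
    ∃! a : ℕ → 𝕜, Tendsto (fun N => ∑ i ∈ Finset.range N, a i • b i) atTop (𝓝 v) := by
  obtain ⟨φ, hφ, -⟩ := h.exists_coordFunctional hb
  refine ⟨fun i => φ i v, h.tendsto_sum_coord (hb 0) hφ hv, fun a ha => funext fun i => ?_⟩
  refine tendsto_nhds_unique (tendsto_const_nhds.congr' ?_) (((φ i).continuous.tendsto v).comp ha)
  filter_upwards [eventually_gt_atTop i] with N hN
  exact (map_sum_range_of_biorthogonal hφ a hN).symm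

end BasisConstLE

lemma BasisConstLE.isBasicSeq {C : ℝ} {b : ℕ → 𝒲} (h : BasisConstLE ℝ C b)
    (hb : ∀ n, b n ≠ 0) : IsBasicSeq b :=
  fun _ hv => h.existsUnique_tendsto_sum hb hv

lemma BasisConstLE.not_finiteDimensional_closedSpan {C : ℝ} {b : ℕ → 𝒲}
    (h : BasisConstLE ℝ C b) (hb : ∀ n, b n ≠ 0) :
    ¬FiniteDimensional ℝ (closedSpan (Set.range b)) :=
  not_finite_of_linearIndependent_of_mem (h.linearIndependent hb) fun i =>
    Submodule.le_topologicalClosure _ (Submodule.subset_span ⟨i, rfl⟩)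

end BasisConstant

section MazurSelection

variable {𝕜 E : Type*} [RCLike 𝕜] [NormedAddCommGroup E] [NormedSpace 𝕜 E]

lemma exists_seq_of_forall_prefix {α : Type*} {P : (n : ℕ) → (Fin n → α) → α → Prop}
    (h : ∀ n p, ∃ a, P n p a) : ∃ x : ℕ → α, ∀ n, P n (fun i => x i) (x n) := by
  choose g hg using h
  let x (n : ℕ) : α := Nat.strongRec (fun n rec => g n fun i : Fin n => rec i i.2) n
  refine ⟨x, fun n => ?_⟩
  have hx : x n = g n fun i => x i := Nat.strongRec_eq _ n
  exact hx ▸ hg n _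

lemma exists_norm_eq_one_norm_le_mul_norm_add_smul {Y : Submodule 𝕜 E}
    (hY : ¬FiniteDimensional 𝕜 Y) (F : Submodule 𝕜 E) [FiniteDimensional 𝕜 F] {C : ℝ}
    (hC : 1 < C) :
    ∃ x ∈ Y, ‖x‖ = 1 ∧ ∀ f ∈ F, ∀ t : 𝕜, ‖f‖ ≤ C * ‖f + t • x‖ := by
  obtain ⟨G, hG, hFG⟩ := exists_coFG_norm_le_mul_norm_add F hC
  have hYG := not_finite_inf_of_coFG hY hG
  obtain ⟨w, hw, hw0⟩ : ∃ w ∈ Y ⊓ G, w ≠ 0 :=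
    Submodule.exists_mem_ne_zero_of_ne_bot fun h => hYG (h ▸ inferInstance)
  have hx := (Y ⊓ G).smul_mem ((‖w‖ : 𝕜)⁻¹) hw
  exact ⟨_, hx.1, norm_smul_inv_norm hw0, fun f hf t => hFG f hf _ (G.smul_mem t hx.2)⟩

theorem exists_basisConstLE_of_not_finiteDimensional {Y : ℕ → Submodule 𝕜 E}
    (hY : ∀ n, ¬FiniteDimensional 𝕜 (Y n)) {C : ℝ} (hC : 1 < C) :
    ∃ x : ℕ → E, (∀ n, x n ∈ Y n) ∧ (∀ n, ‖x n‖ = 1) ∧ BasisConstLE 𝕜 C x := by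
  obtain ⟨D, hD_mono, hD, -⟩ := exists_seq_strictMono_tendsto' hC
  have hD0 (n : ℕ) : 0 < D n := one_pos.trans (hD n).1
  obtain ⟨x, hx⟩ := exists_seq_of_forall_prefix fun n (p : Fin n → E) =>
    have := FiniteDimensional.span_of_finite 𝕜 (Set.finite_range p)
    exists_norm_eq_one_norm_le_mul_norm_add_smul (hY n) (Submodule.span 𝕜 (Set.range p))
      ((one_lt_div (hD0 n)).2 (hD_mono n.lt_succ_self))
  refine ⟨x, fun n => (hx n).1, fun n => (hx n).2.1, fun a m n hmn => ?_⟩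
  have hmono : Monotone fun n => D n * ‖∑ i ∈ Finset.range n, a i • x i‖ := by
    refine monotone_nat_of_le_succ fun n => ?_
    have hmem : ∑ i ∈ Finset.range n, a i • x i ∈
        Submodule.span 𝕜 (Set.range fun i : Fin n => x i) :=
      sum_mem fun i hi => Submodule.smul_mem _ _
        (Submodule.subset_span ⟨⟨i, Finset.mem_range.1 hi⟩, rfl⟩)
    have hstep := (hx n).2.2 _ hmem (a n)
    rwa [← Finset.sum_range_succ, div_mul_eq_mul_div, le_div_iff₀' (hD0 n)] at hstep
  calc ‖∑ i ∈ Finset.range m, a i • x i‖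
      ≤ D m * ‖∑ i ∈ Finset.range m, a i • x i‖ :=
        le_mul_of_one_le_left (norm_nonneg _) (hD m).1.le
    _ ≤ D n * ‖∑ i ∈ Finset.range n, a i • x i‖ := hmono hmn
    _ ≤ C * ‖∑ i ∈ Finset.range n, a i • x i‖ := by gcongr; exact (hD n).2.le

end MazurSelection

section SeqEquiv

variable {K L : ℝ} {n : ℕ} {u v y : ℕ → 𝒲}

lemma seqEquiv_iff (hK : 0 < K) :
    SeqEquiv K n u v ↔ ∀ a : Fin n → ℝ,
      ‖∑ i, a i • u i‖ ≤ K * ‖∑ i, a i • v i‖ ∧ ‖∑ i, a i • v i‖ ≤ K * ‖∑ i, a i • u i‖ := by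
  simp only [SeqEquiv, one_div, inv_mul_le_iff₀ hK, Finset.sum_range]
  refine ⟨fun h a => ?_, fun h a => h fun i => a i⟩
  simpa only [Fin.val_injective.extend_apply] using h (Function.extend Fin.val a 0)

namespace SeqEquiv

lemma symm (hK : 0 < K) (h : SeqEquiv K n u v) : SeqEquiv K n v u :=
  (seqEquiv_iff hK).2 fun a => ((seqEquiv_iff hK).1 h a).symm

lemma trans (hK : 0 < K) (hL : 0 < L) (huv : SeqEquiv K n u v) (hvy : SeqEquiv L n v y) :
    SeqEquiv (K * L) n u y := by
  rw [seqEquiv_iff hK] at huv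
  rw [seqEquiv_iff hL] at hvy
  refine (seqEquiv_iff (mul_pos hK hL)).2 fun a => ⟨?_, ?_⟩
  · rw [mul_assoc]
    exact (huv a).1.trans (by gcongr; exact (hvy a).1)
  · rw [mul_comm K, mul_assoc]
    exact (hvy a).2.trans (by gcongr; exact (huv a).2)

lemma mono (hK : 0 < K) (hKL : K ≤ L) (h : SeqEquiv K n u v) : SeqEquiv L n u v := by
  rw [seqEquiv_iff hK] at h
  exact (seqEquiv_iff (hK.trans_le hKL)).2 fun a =>
    ⟨(h a).1.trans (by gcongr), (h a).2.trans (by gcongr)⟩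

lemma congr_left (huv : ∀ i < n, u i = v i) (h : SeqEquiv K n u y) : SeqEquiv K n v y := by
  intro a
  have hsum : ∑ i ∈ Finset.range n, a i • u i = ∑ i ∈ Finset.range n, a i • v i :=
    Finset.sum_congr rfl fun i hi => by rw [huv i (Finset.mem_range.1 hi)]
  exact hsum ▸ h a

lemma linearCombination {N : ℕ} (h : SeqEquiv K N u v) {l : ℕ → ℕ →₀ ℝ}
    (hl : ∀ i < n, (l i).support ⊆ Finset.range N) :
    SeqEquiv K n (fun i => Finsupp.linearCombination ℝ u (l i))
      fun i => Finsupp.linearCombination ℝ v (l i) := by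
  intro a
  have hsupp : (∑ i ∈ Finset.range n, a i • l i).support ⊆ Finset.range N := by
    refine Finsupp.support_finsetSum.trans (Finset.biUnion_subset.2 fun i hi => ?_)
    exact Finsupp.support_smul.trans (hl i (Finset.mem_range.1 hi))
  have hsum (b : ℕ → 𝒲) : ∑ i ∈ Finset.range n, a i • Finsupp.linearCombination ℝ b (l i) =
      ∑ j ∈ Finset.range N, (∑ i ∈ Finset.range n, a i • l i) j • b j := by
    rw [← linearCombination_eq_sum_range b hsupp, map_sum]
    simp only [map_smul]
  simpa only [hsum] using h _

lemma restrict {m : ℕ} (h : SeqEquiv K n u v) (hmn : m ≤ n) : SeqEquiv K m u v := by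
  have hsupp (i : ℕ) (hi : i < m) : (Finsupp.single i (1 : ℝ)).support ⊆ Finset.range n :=
    Finsupp.support_single_subset.trans (by simpa using hi.trans_le hmn)
  simpa only [Finsupp.linearCombination_single, one_smul] using h.linearCombination hsupp

lemma linearIndependent (hK : 0 < K) (h : SeqEquiv K n u v)
    (hv : LinearIndependent ℝ fun i : Fin n => v i) : LinearIndependent ℝ fun i : Fin n => u i := by
  rw [Fintype.linearIndependent_iff] at hv ⊢
  intro a ha
  have hav := ((seqEquiv_iff hK).1 h a).2
  rw [ha, norm_zero, mul_zero] at hav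
  exact hv a (norm_le_zero_iff.1 hav)

end SeqEquiv

lemma exists_norm_le_mul_norm_sum {ι E : Type*} [Fintype ι] [NormedAddCommGroup E]
    [NormedSpace ℝ E] {u : ι → E} (hu : LinearIndependent ℝ u) :
    ∃ κ > 0, ∀ a : ι → ℝ, ‖a‖ ≤ κ * ‖∑ i, a i • u i‖ := by
  obtain ⟨κ, hκ, h⟩ := (Fintype.linearCombination ℝ u).exists_antilipschitzWith
    (LinearMap.ker_eq_bot.2 hu.fintypeLinearCombination_injective)
  refine ⟨κ, hκ, fun a => ?_⟩
  have ha := h.le_mul_dist a 0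
  rwa [map_zero, dist_zero_right, dist_zero_right, Fintype.linearCombination_apply] at ha

lemma norm_le_mul_norm_of_norm_sub_le {E : Type*} [SeminormedAddCommGroup E] {f g : E} (hK : 0 < K)
    (h : ‖f - g‖ ≤ (1 - K⁻¹) * ‖f‖) : ‖f‖ ≤ K * ‖g‖ ∧ ‖g‖ ≤ K * ‖f‖ := by
  have hlower : K⁻¹ * ‖f‖ ≤ ‖g‖ := by linarith [norm_sub_norm_le f g]
  have hupper : ‖g‖ ≤ (2 - K⁻¹) * ‖f‖ := by linarith [norm_sub_norm_le g f, norm_sub_rev f g]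
  have hK2 : 2 - K⁻¹ ≤ K := by
    have : K - (2 - K⁻¹) = (K - 1) ^ 2 / K := by field_simp; ring
    exact sub_nonneg.1 (this ▸ by positivity)
  exact ⟨(inv_mul_le_iff₀ hK).1 hlower, hupper.trans (by gcongr)⟩

lemma exists_forall_norm_sub_le_seqEquiv (hu : LinearIndependent ℝ fun i : Fin n => u i)
    (hK : 1 < K) : ∃ δ > 0, ∀ v : ℕ → 𝒲, (∀ i < n, ‖u i - v i‖ ≤ δ) → SeqEquiv K n u v := by
  obtain ⟨κ, hκ, hκu⟩ := exists_norm_le_mul_norm_sum hu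
  have hK0 : 0 < K := one_pos.trans hK
  have hη : 0 < 1 - K⁻¹ := sub_pos.2 (inv_lt_one_of_one_lt₀ hK)
  refine ⟨(1 - K⁻¹) / ((n + 1) * κ), by positivity, fun v hv => (seqEquiv_iff hK0).2 fun a => ?_⟩
  have hdiff : ‖∑ i, a i • u i - ∑ i, a i • v i‖ ≤ (1 - K⁻¹) * ‖∑ i, a i • u i‖ :=
    calc ‖∑ i, a i • u i - ∑ i, a i • v i‖ = ‖∑ i, a i • (u i - v i)‖ := by
          simp only [smul_sub, Finset.sum_sub_distrib]
      _ ≤ ∑ _i : Fin n, ‖a‖ * ((1 - K⁻¹) / ((n + 1) * κ)) := by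
          refine norm_sum_le_of_le _ fun i _ => ?_
          rw [norm_smul]
          exact mul_le_mul (norm_le_pi_norm a i) (hv i i.2) (norm_nonneg _) (norm_nonneg _)
      _ = n / (n + 1) * (‖a‖ / κ) * (1 - K⁻¹) := by
          rw [Finset.sum_const, Finset.card_univ, Fintype.card_fin, nsmul_eq_mul]
          field_simp
      _ ≤ 1 * ‖∑ i, a i • u i‖ * (1 - K⁻¹) := by
          gcongr
          · exact (div_le_one (by positivity)).2 (le_add_of_nonneg_right zero_le_one)
          · exact (div_le_iff₀' hκ).2 (hκu a)
      _ = (1 - K⁻¹) * ‖∑ i, a i • u i‖ := by ring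
  exact norm_le_mul_norm_of_norm_sub_le hK0 hdiff

end SeqEquiv

section ClosedSpan

lemma isClosed_closedSpan (S : Set 𝒲) : IsClosed (closedSpan S : Set 𝒲) :=
  Submodule.isClosed_topologicalClosure _

lemma span_le_closedSpan (S : Set 𝒲) : Submodule.span ℝ S ≤ closedSpan S :=
  Submodule.le_topologicalClosure _

lemma subset_closedSpan (S : Set 𝒲) : S ⊆ closedSpan S :=
  Submodule.subset_span.trans (span_le_closedSpan S)

lemma closedSpan_le {S : Set 𝒲} {Z : Submodule ℝ 𝒲} (hZ : IsClosed (Z : Set 𝒲))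
    (hS : S ⊆ Z) : closedSpan S ≤ Z :=
  Submodule.topologicalClosure_minimal _ (Submodule.span_le.2 hS) hZ

lemma closedSpan_mono {S S' : Set 𝒲} (h : S ⊆ S') : closedSpan S ≤ closedSpan S' :=
  closedSpan_le (isClosed_closedSpan S') (h.trans (subset_closedSpan S'))

lemma closedSpan_le_comap {S : Set 𝒲} {Z : Submodule ℝ 𝒲} (hZ : IsClosed (Z : Set 𝒲))
    (T : 𝒲 →L[ℝ] 𝒲) (hT : Set.MapsTo T S Z) :
    closedSpan S ≤ Z.comap (T : 𝒲 →ₗ[ℝ] 𝒲) :=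
  closedSpan_le (hZ.preimage T.continuous) hT

lemma closedSpan_range_le_span_sup_closedSpan (x : ℕ → 𝒲) (N : ℕ) :
    closedSpan (Set.range x) ≤
      Submodule.span ℝ (x '' Set.Iio N) ⊔ closedSpan (x '' Set.Ici N) := by
  have := FiniteDimensional.span_of_finite ℝ ((Set.finite_Iio N).image x)
  rw [sup_comm]
  refine closedSpan_le
    (Submodule.isClosed_sup_finiteDimensional _ _ (isClosed_closedSpan _)) ?_
  rintro _ ⟨j, rfl⟩
  rcases lt_or_ge j N with hj | hj
  · exact Submodule.mem_sup_right (Submodule.subset_span ⟨j, hj, rfl⟩)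
  · exact Submodule.mem_sup_left (subset_closedSpan _ ⟨j, hj, rfl⟩)

end ClosedSpan

section BlockSequences

variable {x y : ℕ → 𝒲}

lemma SuppIn.mem_span {v : 𝒲} {s : Finset ℕ} {S : Set ℕ} (h : SuppIn x v s) (hs : ↑s ⊆ S) :
    v ∈ Submodule.span ℝ (x '' S) := by
  obtain ⟨a, rfl⟩ := h
  exact sum_mem fun i hi => Submodule.smul_mem _ _ (Submodule.subset_span ⟨i, hs hi, rfl⟩)

namespace IsBlockSeq

lemma mem_span (hy : IsBlockSeq x y) (n : ℕ) : y n ∈ Submodule.span ℝ (Set.range x) := by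
  obtain ⟨-, D, hD, -⟩ := hy
  exact Set.image_univ ▸ (hD n).mem_span (Set.subset_univ _)

lemma exists_cut (hy : IsBlockSeq x y) (N : ℕ) :
    ∃ M, (∀ j < N, y j ∈ Submodule.span ℝ (x '' Set.Iio M)) ∧
      ∀ j ≥ N, y j ∈ Submodule.span ℝ (x '' Set.Ici M) := by
  obtain ⟨hy0, D, hD, hlt⟩ := hy
  have hne (n : ℕ) : (D n).Nonempty := by
    refine Finset.nonempty_iff_ne_empty.2 fun h => hy0 n ?_
    obtain ⟨a, ha⟩ := hD n
    rw [ha, h, Finset.sum_empty]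
  have hlt' {m n : ℕ} (hmn : m < n) : ∀ i ∈ D m, ∀ j ∈ D n, i < j := by
    induction n, hmn using Nat.le_induction with
    | base => exact hlt m
    | succ n _ ih =>
      intro i hi j hj
      obtain ⟨p, hp⟩ := hne n
      exact (ih i hi p hp).trans (hlt n p hp j hj)
  refine ⟨(D N).min' (hne N), fun j hj => (hD j).mem_span fun i hi => ?_,
    fun j hj => (hD j).mem_span fun i hi => ?_⟩
  · exact hlt' hj i hi _ ((D N).min'_mem _)
  · rcases hj.eq_or_lt with rfl | hj
    · exact (D N).min'_le i hi
    · exact (hlt' hj _ ((D N).min'_mem _) i hi).le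

lemma basisConstLE {C : ℝ} (hy : IsBlockSeq x y) (hx : BasisConstLE ℝ C x) :
    BasisConstLE ℝ C y := by
  intro a m n hmn
  obtain ⟨M, hlow, hhigh⟩ := hy.exists_cut m
  rw [← Finset.sum_range_add_sum_Ico _ hmn]
  exact hx.norm_le_of_mem_span
    (sum_mem fun j hj => Submodule.smul_mem _ _ (hlow j (Finset.mem_range.1 hj)))
    (sum_mem fun j hj => Submodule.smul_mem _ _ (hhigh j (Finset.mem_Ico.1 hj).1))

end IsBlockSeq

end BlockSequences

section PrefixEmbeds

/-- The finite sequence `y 0, …, y (n - 1)` is `K`-equivalent to a sequence of vectors of `Z`. -/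
def PrefixEmbeds (K : ℝ) (n : ℕ) (y : ℕ → 𝒲) (Z : Submodule ℝ 𝒲) : Prop :=
  ∃ u : ℕ → 𝒲, (∀ i, u i ∈ Z) ∧ SeqEquiv K n u y

lemma prefixEmbeds_of_mem_embTree {K : ℝ} {n : ℕ} {y : ℕ → 𝒲} {Z : Submodule ℝ 𝒲} {l : List 𝒲}
    (hl : l ∈ embTree y (Z : Set 𝒲) K) (hn : n ≤ l.length) : PrefixEmbeds K n y Z := by
  refine ⟨fun i => l.getD i 0, fun i => ?_, hl.2.restrict hn⟩
  rcases lt_or_ge i l.length with hi | hi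
  · simpa only [List.getD_eq_getElem l 0 hi, SetLike.mem_coe] using hl.1 _ (List.getElem_mem hi)
  · simpa only [List.getD_eq_default l 0 hi] using Z.zero_mem

namespace PrefixEmbeds

variable {K L : ℝ} {n : ℕ} {y z : ℕ → 𝒲} {Z Z' : Submodule ℝ 𝒲}

lemma mono (hZ : Z ≤ Z') (h : PrefixEmbeds K n y Z) : PrefixEmbeds K n y Z' := by
  obtain ⟨u, hu, huy⟩ := h
  exact ⟨u, fun i => hZ (hu i), huy⟩

lemma mono_const (hK : 0 < K) (hKL : K ≤ L) (h : PrefixEmbeds K n y Z) :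
    PrefixEmbeds L n y Z := by
  obtain ⟨u, hu, huy⟩ := h
  exact ⟨u, hu, huy.mono hK hKL⟩

lemma trans (hK : 0 < K) (hL : 0 < L) (h : PrefixEmbeds K n y Z) (hyz : SeqEquiv L n y z) :
    PrefixEmbeds (K * L) n z Z := by
  obtain ⟨u, hu, huy⟩ := h
  exact ⟨u, hu, huy.trans hK hL hyz⟩

lemma map (hK : 0 < K) (hL : 0 < L) {T : 𝒲 →ₗ[ℝ] 𝒲} (hT : Z ≤ Z'.comap T)
    (hT_le : ∀ w ∈ Z, ‖T w‖ ≤ L * ‖w‖ ∧ ‖w‖ ≤ L * ‖T w‖) (h : PrefixEmbeds K n y Z) :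
    PrefixEmbeds (L * K) n y Z' := by
  obtain ⟨u, hu, huy⟩ := h
  refine ⟨fun i => T (u i), fun i => hT (hu i), SeqEquiv.trans hL hK ?_ huy⟩
  refine (seqEquiv_iff hL).2 fun a => ?_
  simp only [← map_smul, ← map_sum]
  exact hT_le _ (sum_mem fun i _ => Z.smul_mem _ (hu i))

lemma of_topologicalClosure (hK : 0 < K) (hL : 1 < L)
    (hy : LinearIndependent ℝ fun i : Fin n => y i)
    (h : PrefixEmbeds K n y Z.topologicalClosure) : PrefixEmbeds (L * K) n y Z := by
  obtain ⟨u, hu, huy⟩ := h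
  have hL0 : 0 < L := one_pos.trans hL
  obtain ⟨δ, hδ, hclose⟩ := exists_forall_norm_sub_le_seqEquiv (huy.linearIndependent hK hy) hL
  choose v hvZ huv using fun i => Metric.mem_closure_iff.1 (hu i) δ hδ
  have huv_equiv : SeqEquiv L n u v := hclose v fun i _ => dist_eq_norm (u i) (v i) ▸ (huv i).le
  exact ⟨v, hvZ, (huv_equiv.symm hL0).trans hL0 hK huy⟩

lemma of_mem_span (hz : ∀ i, z i ∈ Submodule.span ℝ (Set.range y))
    (h : ∀ N, PrefixEmbeds K N y Z) (n : ℕ) : PrefixEmbeds K n z Z := by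
  choose l hl using fun i => Finsupp.mem_span_range_iff_exists_finsupp.1 (hz i)
  obtain ⟨N, hN⟩ := ((Finset.range n).biUnion fun i => (l i).support).exists_nat_subset_range
  obtain ⟨u, hu, huy⟩ := h N
  refine ⟨fun i => Finsupp.linearCombination ℝ u (l i), fun i => ?_, ?_⟩
  · exact sum_mem fun j _ => Z.smul_mem _ (hu j)
  · have hzl : z = fun i => Finsupp.linearCombination ℝ y (l i) := funext fun i => (hl i).symm
    rw [hzl]
    exact huy.linearCombination fun i hi => (Finset.subset_biUnion_of_mem
      (fun i => (l i).support) (Finset.mem_range.2 hi)).trans hN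

end PrefixEmbeds

end PrefixEmbeds

section Stabilization

lemma exists_antitone_seq_stabilizing {α ι : Type*} [Preorder α] [Countable ι] [Nonempty ι]
    (P : ι → α → Prop) (a : α) :
    ∃ Y : ℕ → α, Antitone Y ∧ Y 0 = a ∧ ∀ i, ∃ n, P i (Y n) → ∀ z ≤ Y n, P i z := by
  have hstep (i : ι) (b : α) : ∃ c ≤ b, P i c → ∀ z ≤ c, P i z := by
    by_cases h : ∀ z ≤ b, P i z
    · exact ⟨b, le_rfl, fun _ => h⟩
    · push Not at h
      obtain ⟨c, hcb, hc⟩ := h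
      exact ⟨c, hcb, fun hc' => absurd hc' hc⟩
  choose g hg_le hg using hstep
  obtain ⟨f, hf⟩ := exists_surjective_nat ι
  let Y : ℕ → α := fun n => Nat.rec a (fun k b => g (f k) b) n
  refine ⟨Y, antitone_nat_of_succ_le fun k => hg_le (f k) (Y k), rfl, fun i => ?_⟩
  obtain ⟨k, rfl⟩ := hf i
  exact ⟨k + 1, hg (f k) (Y k)⟩

theorem exists_basisConstLE_stabilizing {ι : Type*} [Countable ι] [Nonempty ι]
    {P : ι → Submodule ℝ 𝒲 → Prop} (hP : ∀ i, Monotone (P i)) {Y₀ : Submodule ℝ 𝒲}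
    (hY₀ : IsClosed (Y₀ : Set 𝒲)) (hY₀_inf : ¬FiniteDimensional ℝ Y₀) {C : ℝ} (hC : 1 < C) :
    ∃ x : ℕ → 𝒲, (∀ n, x n ∈ Y₀) ∧ (∀ n, ‖x n‖ = 1) ∧ BasisConstLE ℝ C x ∧
      ∀ i, (∀ N, P i (closedSpan (x '' Set.Ici N))) →
        ∀ Z ≤ closedSpan (Set.range x), IsClosed (Z : Set 𝒲) → ¬FiniteDimensional ℝ Z → P i Z := by
  obtain ⟨Y, hY_anti, hY0, hY⟩ := exists_antitone_seq_stabilizing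
    (α := {Z : Submodule ℝ 𝒲 // IsClosed (Z : Set 𝒲) ∧ ¬FiniteDimensional ℝ Z})
    (fun i Z => P i Z) ⟨Y₀, hY₀, hY₀_inf⟩
  obtain ⟨x, hxY, hx_norm, hx⟩ :=
    exists_basisConstLE_of_not_finiteDimensional (fun n => (Y n).2.2) hC
  have hx_tail (N : ℕ) : closedSpan (x '' Set.Ici N) ≤ Y N :=
    closedSpan_le (Y N).2.1 (Set.image_subset_iff.2 fun n hn => hY_anti hn (hxY n))
  refine ⟨x, fun n => ?_, hx_norm, hx, fun i hi Z hZ hZ_closed hZ_inf => ?_⟩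
  · have := hY_anti n.zero_le (hxY n)
    rwa [hY0] at this
  · obtain ⟨N, hN⟩ := hY i
    have hZN_inf : ¬FiniteDimensional ℝ (Z ⊓ closedSpan (x '' Set.Ici N) : Submodule ℝ 𝒲) :=
      not_finite_inf_of_le_sup hZ_inf (Submodule.fg_span ((Set.finite_Iio N).image x))
        (hZ.trans (closedSpan_range_le_span_sup_closedSpan x N))
    exact hP i inf_le_left <| hN (hP i (hx_tail N) (hi N))
      ⟨_, hZ_closed.inter (isClosed_closedSpan _), hZN_inf⟩ (inf_le_right.trans (hx_tail N))

lemma exists_seqEquiv_net {S : Set 𝒲} (hS : TopologicalSpace.IsSeparable S) (hS₀ : S.Nonempty) :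
    ∃ w : ℕ → ℕ → 𝒲, ∀ y : ℕ → 𝒲, (∀ i, y i ∈ S) → ∀ n,
      (LinearIndependent ℝ fun i : Fin n => y i) → ∀ K > 1, ∃ k, SeqEquiv K n y (w k) := by
  have := hS.separableSpace
  have := hS₀.to_subtype
  refine ⟨fun k i => TopologicalSpace.denseSeq (ℕ → S) k i, fun y hyS n hy K hK => ?_⟩
  obtain ⟨δ, hδ, hclose⟩ := exists_forall_norm_sub_le_seqEquiv hy hK
  let y' : ℕ → S := fun i => ⟨y i, hyS i⟩
  obtain ⟨k, hk⟩ := (TopologicalSpace.denseRange_denseSeq (ℕ → S)).exists_mem_open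
    (isOpen_set_pi (Set.finite_Iio n) fun i _ => Metric.isOpen_ball (x := y' i) (ε := δ))
    ⟨y', fun i _ => Metric.mem_ball_self hδ⟩
  refine ⟨k, hclose _ fun i hi => ?_⟩
  rw [← dist_eq_norm, dist_comm]
  exact (hk i hi).le

theorem exists_basisConstLE_stabilizing_prefixEmbeds (hinf : ¬FiniteDimensional ℝ 𝒲) :
    ∃ x : ℕ → 𝒲, (∀ n, ‖x n‖ = 1) ∧ BasisConstLE ℝ 2 x ∧
      ∀ y : ℕ → 𝒲, (∀ i, y i ∈ closedSpan (Set.range x)) → LinearIndependent ℝ y →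
        ∀ K : ℕ, 0 < K → ∀ n, (∀ N, PrefixEmbeds K n y (closedSpan (x '' Set.Ici N))) →
          ∀ Z ≤ closedSpan (Set.range x), ¬FiniteDimensional ℝ Z → PrefixEmbeds (8 * K) n y Z := by
  obtain ⟨x₀, -, hx₀_norm, hx₀⟩ := exists_basisConstLE_of_not_finiteDimensional (𝕜 := ℝ)
    (Y := fun _ => (⊤ : Submodule ℝ 𝒲))
    (fun _ _ => hinf (Module.Finite.equiv Submodule.topEquiv)) one_lt_two
  have hx₀_ne (n : ℕ) : x₀ n ≠ 0 := ne_zero_of_norm_ne_zero (by simp [hx₀_norm n])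
  have hsep : TopologicalSpace.IsSeparable (closedSpan (Set.range x₀) : Set 𝒲) :=
    ((Set.countable_range x₀).isSeparable.span (R := ℝ)).closure
  obtain ⟨w, hw⟩ := exists_seqEquiv_net hsep ⟨0, zero_mem _⟩
  obtain ⟨x, hx_mem, hx_norm, hx, hx_stable⟩ := exists_basisConstLE_stabilizing
    (P := fun (i : ℕ × ℕ × ℕ) Z => PrefixEmbeds i.1 i.2.1 (w i.2.2) Z)
    (fun _ _ _ h => PrefixEmbeds.mono h) (isClosed_closedSpan _)
    (hx₀.not_finiteDimensional_closedSpan hx₀_ne) one_lt_two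
  have hx_le : closedSpan (Set.range x) ≤ closedSpan (Set.range x₀) :=
    closedSpan_le (isClosed_closedSpan _) (Set.range_subset_iff.2 hx_mem)
  refine ⟨x, hx_norm, hx, fun y hy hy_indep K hK n hy_tail Z hZ hZ_inf => ?_⟩
  have hK0 : (0 : ℝ) < K := Nat.cast_pos.2 hK
  have hy_indep_n : LinearIndependent ℝ fun i : Fin n => y i :=
    hy_indep.comp _ Fin.val_injective
  obtain ⟨k, hk⟩ := hw y (fun i => hx_le (hy i)) n hy_indep_n 2 one_lt_two
  have hw_tail (N : ℕ) :
      PrefixEmbeds (K * 2 : ℕ) n (w k) (closedSpan (x '' Set.Ici N)) := by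
    exact_mod_cast (hy_tail N).trans hK0 two_pos hk
  have hw_Z : PrefixEmbeds (K * 2) n (w k) Z.topologicalClosure := by
    exact_mod_cast hx_stable (K * 2, n, k) hw_tail Z.topologicalClosure
      (Z.topologicalClosure_minimal hZ (isClosed_closedSpan _)) Z.isClosed_topologicalClosure
      fun _ => hZ_inf (Submodule.finiteDimensional_of_le Z.le_topologicalClosure)
  have hy_Z := (hw_Z.trans (by positivity) two_pos (hk.symm two_pos)).of_topologicalClosure
    (by positivity) one_lt_two hy_indep_n
  rwa [show (2 : ℝ) * (K * 2 * 2) = 8 * K by ring] at hy_Z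

end Stabilization

section Swap

lemma BasisConstLE.exists_swap_clm {𝕜 E : Type*} [RCLike 𝕜] [NormedAddCommGroup E]
    [NormedSpace 𝕜 E] {C : ℝ} {x : ℕ → E} (hx : BasisConstLE 𝕜 C x) (hx_norm : ∀ n, ‖x n‖ = 1)
    (p q : ℕ) :
    ∃ T : E →L[𝕜] E, ‖T‖ ≤ 1 + 8 * C ∧ ∀ m, T (x m) = x (Equiv.swap p q m) := by
  have hx_ne (n : ℕ) : x n ≠ 0 := ne_zero_of_norm_ne_zero (by simp [hx_norm n])
  obtain ⟨φ, hφ, hφ_norm⟩ := hx.exists_coordFunctional hx_ne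
  have hC : 0 ≤ C := zero_le_one.trans (hx.one_le (hx_ne 0))
  have hφ_sub : ‖φ p - φ q‖ ≤ 2 * C + 2 * C := by
    simpa [hx_norm] using norm_sub_le_of_le (hφ_norm p) (hφ_norm q)
  have hx_sub : ‖x p - x q‖ ≤ 1 + 1 := norm_sub_le_of_le (hx_norm p).le (hx_norm q).le
  refine ⟨.id 𝕜 E - (φ p - φ q).smulRight (x p - x q), ?_, fun m => ?_⟩
  · refine norm_sub_le_of_le ContinuousLinearMap.norm_id_le ?_
    rw [ContinuousLinearMap.norm_smulRight_apply]
    calc ‖φ p - φ q‖ * ‖x p - x q‖ ≤ (2 * C + 2 * C) * (1 + 1) := by gcongr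
      _ = 8 * C := by ring
  · have hT : (ContinuousLinearMap.id 𝕜 E - (φ p - φ q).smulRight (x p - x q)) (x m) =
        x m - ((if p = m then 1 else 0) - if q = m then 1 else 0 : 𝕜) • (x p - x q) := by
      simp [hφ]
    rw [hT]
    rcases eq_or_ne m p with rfl | hmp
    · rcases eq_or_ne m q with rfl | hmq
      · simp
      · simp [hmq.symm]
    · rcases eq_or_ne m q with rfl | hmq
      · simp [hmp.symm]
      · simp [hmp.symm, hmq.symm, Equiv.swap_apply_of_ne_of_ne hmp hmq]

variable {K C : ℝ} {n : ℕ} {x y : ℕ → 𝒲}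

lemma PrefixEmbeds.swap (hx : BasisConstLE ℝ C x) (hx_norm : ∀ n, ‖x n‖ = 1) (hK : 0 < K)
    (p q : ℕ) {M : Set ℕ} (h : PrefixEmbeds K n y (closedSpan (x '' M))) :
    PrefixEmbeds ((1 + 8 * C) * K) n y (closedSpan (x '' (Equiv.swap p q '' M))) := by
  obtain ⟨T, hT_norm, hT⟩ := hx.exists_swap_clm hx_norm p q
  have hC : 1 ≤ C := hx.one_le (ne_zero_of_norm_ne_zero (by simp [hx_norm 0]))
  have hT_maps : Set.MapsTo T (x '' M) (closedSpan (x '' (Equiv.swap p q '' M))) := by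
    rintro _ ⟨m, hm, rfl⟩
    exact hT m ▸ subset_closedSpan _ ⟨_, ⟨m, hm, rfl⟩, rfl⟩
  have hTT : Set.EqOn (T ∘L T) (ContinuousLinearMap.id ℝ 𝒲) (closedSpan (x '' M)) := by
    refine ContinuousLinearMap.eqOn_closure_span ?_
    rintro _ ⟨m, -, rfl⟩
    simp [hT]
  refine h.map hK (by linarith) (closedSpan_le_comap (isClosed_closedSpan _) T hT_maps)
    fun w hw => ⟨T.le_of_opNorm_le hT_norm w, ?_⟩
  calc ‖w‖ = ‖T (T w)‖ := congrArg norm (hTT hw).symm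
    _ ≤ (1 + 8 * C) * ‖T w‖ := T.le_of_opNorm_le hT_norm _

lemma PrefixEmbeds.of_Iio_union_Ici (hx : BasisConstLE ℝ C x) (hx_norm : ∀ n, ‖x n‖ = 1)
    (N a : ℕ) (hK : 0 < K)
    (h : PrefixEmbeds K n y (closedSpan (x '' (Set.Iio a ∪ Set.Ici (N + a))))) :
    PrefixEmbeds ((1 + 8 * C) ^ a * K) n y (closedSpan (x '' Set.Ici N)) := by
  have hC : 1 ≤ C := hx.one_le (ne_zero_of_norm_ne_zero (by simp [hx_norm 0]))
  induction a generalizing K with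
  | zero => simpa using h
  | succ a ih =>
    rw [pow_succ, mul_assoc]
    refine ih (by positivity) <|
      (h.swap hx hx_norm hK a (N + a)).mono (closedSpan_mono (Set.image_mono ?_))
    rintro _ ⟨m, hm, rfl⟩
    simp only [Set.mem_union, Set.mem_Iio, Set.mem_Ici] at hm ⊢
    rw [Equiv.swap_apply_def]
    split_ifs <;> omega

lemma exists_not_prefixEmbeds_compl_Icc (hx : BasisConstLE ℝ C x) (hx_norm : ∀ n, ‖x n‖ = 1)
    (H : ∀ K : ℕ, 0 < K → ∃ N n, ¬PrefixEmbeds K n y (closedSpan (x '' Set.Ici N)))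
    (hK : 0 < K) (a : ℕ) :
    ∃ b ≥ a, ∃ n, ¬PrefixEmbeds K n y (closedSpan (x '' (↑(Finset.Icc a b))ᶜ)) := by
  have hC : 1 ≤ C := hx.one_le (ne_zero_of_norm_ne_zero (by simp [hx_norm 0]))
  have hpos : 0 < (1 + 8 * C) ^ a * K := by positivity
  obtain ⟨N, n, hn⟩ := H ⌈(1 + 8 * C) ^ a * K⌉₊ (Nat.ceil_pos.2 hpos)
  refine ⟨N + a, Nat.le_add_left a N, n, fun h => hn ?_⟩
  refine PrefixEmbeds.mono_const hpos (Nat.le_ceil _) <|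
    PrefixEmbeds.of_Iio_union_Ici hx hx_norm N a hK (h.mono (closedSpan_mono (Set.image_mono ?_)))
  intro m hm
  simp only [Set.mem_compl_iff, Finset.coe_Icc, Set.mem_Icc, Set.mem_union, Set.mem_Iio,
    Set.mem_Ici] at hm ⊢
  omega

end Swap

section TreeRank

/-- `t` is a proper end-extension of `s`; `treeRank T` is the rank of this relation on `T`. -/
abbrev ProperlyExtends {α : Type*} {T : Set (List α)} (t s : T) : Prop :=
  s.val <+: t.val ∧ s.val ≠ t.val

lemma ProperlyExtends.length_lt {α : Type*} {T : Set (List α)} {t s : T} (h : ProperlyExtends t s) :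
    s.val.length < t.val.length :=
  h.1.length_le.lt_of_ne fun e => h.2 (h.1.eq_of_length e)

lemma treeRank_le_of_length_le {V : Type} {T : Set (List V)} {n : ℕ} (hT : ∀ l ∈ T, l.length ≤ n) :
    treeRank T ≤ ((n + 1 : ℕ) : Ordinal) := by
  have hlt {t s : T} (h : ProperlyExtends t s) : n - t.val.length < n - s.val.length := by
    have := h.length_lt
    have := hT t t.2
    omega
  have hwf : WellFounded fun t s : T => ProperlyExtends t s :=
    Subrelation.wf hlt (measure fun s : T => n - s.val.length).wf
  have hrank (s : T) : (hwf.apply s).rank ≤ ((n - s.val.length : ℕ) : Ordinal) := by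
    induction s using hwf.induction with
    | _ s ih =>
      rw [Acc.rank_eq]
      refine Ordinal.iSup_le fun t => Order.succ_le_iff.2 ((ih t.1 t.2).trans_lt ?_)
      exact_mod_cast hlt t.2
  rw [treeRank, dif_pos hwf]
  refine WithTop.coe_le_coe.2 (Ordinal.iSup_le fun s => ?_)
  rw [Nat.cast_succ, ← Order.succ_eq_add_one]
  exact Order.succ_le_succ ((hrank s).trans (by exact_mod_cast n.sub_le _))

lemma embIndex_le {x : ℕ → 𝒲} {Y : Set 𝒲} {α : Ordinal}
    (h : ∀ K : ℝ, 1 ≤ K → treeRank (embTree x Y K) ≤ α) : embIndex x Y ≤ α := by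
  rw [embIndex, if_neg]
  · refine WithTop.coe_le_coe.2 (csSup_le' ?_)
    rintro o ⟨K, hK, ho⟩
    exact WithTop.coe_le_coe.1 (ho ▸ h K hK)
  · rintro ⟨K, hK, hT⟩
    exact WithTop.coe_ne_top (top_le_iff.1 (hT ▸ h K hK))

end TreeRank

section Tightness

lemma exists_intervalSeq {P : ℕ → Finset ℕ → Prop} (h : ∀ j a, ∃ b ≥ a, P j (Finset.Icc a b)) :
    ∃ I, IntervalSeq I ∧ ∀ j, P j (I j) := by
  choose b hab hP using h
  let a : ℕ → ℕ := fun j => Nat.rec 0 (fun j a => b j a + 1) j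
  refine ⟨fun j => Finset.Icc (a j) (b j (a j)), ⟨fun j => ⟨_, _, hab _ _, rfl⟩, ?_⟩,
    fun j => hP _ _⟩
  intro j i hi k hk
  exact Nat.lt_of_le_of_lt (Finset.mem_Icc.1 hi).2 (Finset.mem_Icc.1 hk).1

theorem isAlphaTight_omega0 {C : ℝ} {x : ℕ → 𝒲} (hx : BasisConstLE ℝ C x)
    (hx_norm : ∀ n, ‖x n‖ = 1)
    (H : ∀ y, IsBlockSeq x y → ∀ K : ℕ, 0 < K →
      ∃ N n, ¬PrefixEmbeds K n y (closedSpan (x '' Set.Ici N))) :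
    IsAlphaTight x Ordinal.omega0 := by
  intro y hy
  obtain ⟨I, hI, hIy⟩ := exists_intervalSeq
    (P := fun j s => ∃ n, ¬PrefixEmbeds (j + 1) n y (closedSpan (x '' (↑s)ᶜ))) fun j a =>
    exists_not_prefixEmbeds_compl_Icc hx hx_norm (H y hy) (K := j + 1) j.cast_add_one_pos a
  refine ⟨I, hI, fun A hA => embIndex_le fun K hK => ?_⟩
  obtain ⟨j, hjA, hj⟩ := hA.exists_gt ⌈K⌉₊
  have hKj : K ≤ j + 1 := (Nat.lt_of_ceil_lt hj).le.trans (le_add_of_nonneg_right zero_le_one)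
  have hA_le : residualSpace x I A ≤ closedSpan (x '' (↑(I j))ᶜ) := by
    refine closedSpan_mono ?_
    rintro _ ⟨m, hm, rfl⟩
    exact ⟨m, hm j hjA, rfl⟩
  obtain ⟨n, hn⟩ := hIy j
  have hlength : ∀ l ∈ embTree y (residualSpace x I A : Set 𝒲) K, l.length ≤ n :=
    fun l hl => le_of_not_gt fun hlt => hn <|
      ((prefixEmbeds_of_mem_embTree hl hlt.le).mono_const (one_pos.trans_le hK) hKj).mono hA_le
  exact (treeRank_le_of_length_le hlength).trans
    (WithTop.coe_le_coe.2 (Ordinal.natCast_lt_omega0 _).le)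

end Tightness

section LowerBound

lemma rank_add_length_le_rank {α : Type*} {T : Set (List α)} (hT : ∀ l l', l ++ l' ∈ T → l ∈ T)
    (hwf : WellFounded fun t s : T => ProperlyExtends t s) {t s : T} {l : List α}
    (hts : t.val = s.val ++ l) : (hwf.apply t).rank + l.length ≤ (hwf.apply s).rank := by
  induction l generalizing s with
  | nil =>
    obtain rfl : t = s := Subtype.ext (hts.trans s.val.append_nil)
    simp
  | cons v l ih =>
    rw [List.append_cons] at hts
    let s' : T := ⟨s.val ++ [v], hT _ l (hts ▸ t.2)⟩
    have hs' : ProperlyExtends s' s := ⟨List.prefix_append _ _, by simp [s']⟩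
    have hlt := (ih (s := s') hts).trans_lt (Acc.rank_lt_of_rel (hwf.apply s) hs')
    rw [List.length_cons, Nat.cast_succ, ← add_assoc, ← Order.succ_eq_add_one]
    exact Order.succ_le_of_lt hlt

variable {x : ℕ → 𝒲} {Y : Set 𝒲}

lemma mem_embTree_of_append {K : ℝ} {l l' : List 𝒲} (h : l ++ l' ∈ embTree x Y K) :
    l ∈ embTree x Y K := by
  refine ⟨fun v hv => h.1 v (List.mem_append_left l' hv), ?_⟩
  have hlen : l.length ≤ (l ++ l').length := by simp
  exact (h.2.restrict hlen).congr_left fun i hi => List.getD_append _ _ _ _ hi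

lemma nil_mem_embTree (K : ℝ) : [] ∈ embTree x Y K := ⟨by simp, fun a => by simp⟩

lemma treeRank_le_embIndex {K : ℝ} (hK : 1 ≤ K) : treeRank (embTree x Y K) ≤ embIndex x Y := by
  rw [embIndex]
  split_ifs with htop
  · exact le_top
  obtain ⟨o, ho⟩ := WithTop.ne_top_iff_exists.1 fun h => htop ⟨K, hK, h⟩
  rw [← ho]
  refine WithTop.coe_le_coe.2 (le_csSup ?_ ⟨K, hK, ho⟩)
  have : Small.{0} {o : Ordinal | ∃ K : ℝ, 1 ≤ K ∧
      (o : WithTop Ordinal) = treeRank (embTree x Y K)} := by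
    refine small_subset (s := Set.range fun K : ℝ => (treeRank (embTree x Y K)).untopD 0) ?_
    rintro o ⟨K, -, ho⟩
    exact ⟨K, by simp [← ho]⟩
  exact Ordinal.bddAbove_of_small

lemma exists_omega0_mul_le_rank
    (H : ∀ c : ℝ, 1 ≤ c → ∃ c' ≥ c, ∀ l ∈ embTree x Y c, ∀ k : ℕ,
      ∃ l' : List 𝒲, l'.length = k ∧ l ++ l' ∈ embTree x Y c') (m : ℕ) :
    ∀ c : ℝ, 1 ≤ c → ∃ K ≥ c,
      ∀ (hwf : WellFounded fun t s : embTree x Y K => ProperlyExtends t s) (s : embTree x Y K),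
        s.val ∈ embTree x Y c → Ordinal.omega0 * m ≤ (hwf.apply s).rank := by
  induction m with
  | zero => exact fun c _ => ⟨c, le_rfl, fun hwf s _ => by simp⟩
  | succ m ih =>
    intro c hc
    obtain ⟨c', hcc', hext⟩ := H c hc
    obtain ⟨K, hc'K, hrank⟩ := ih c' (hc.trans hcc')
    refine ⟨K, hcc'.trans hc'K, fun hwf s hs => ?_⟩
    rw [Nat.cast_succ, mul_add, mul_one,
      Ordinal.add_le_iff_of_isSuccLimit Ordinal.isSuccLimit_omega0]
    intro β hβ
    obtain ⟨k, rfl⟩ := Ordinal.lt_omega0.1 hβ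
    obtain ⟨l, rfl, hl⟩ := hext _ hs k
    let t : embTree x Y K := ⟨s.val ++ l, hl.1, hl.2.mono (by linarith) hc'K⟩
    calc Ordinal.omega0 * m + l.length ≤ (hwf.apply t).rank + l.length := by
          gcongr
          exact hrank hwf t hl
      _ ≤ (hwf.apply s).rank :=
        rank_add_length_le_rank (fun _ _ => mem_embTree_of_append) hwf rfl

theorem omega0_mul_omega0_le_embIndex
    (H : ∀ c : ℝ, 1 ≤ c → ∃ c' ≥ c, ∀ l ∈ embTree x Y c, ∀ k : ℕ,
      ∃ l' : List 𝒲, l'.length = k ∧ l ++ l' ∈ embTree x Y c') :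
    (Ordinal.omega0 * Ordinal.omega0 : Ordinal) ≤ embIndex x Y := by
  have hmul (m : ℕ) : (Ordinal.omega0 * m : Ordinal) ≤ embIndex x Y := by
    obtain ⟨K, hK, hrank⟩ := exists_omega0_mul_le_rank H m 1 le_rfl
    refine le_trans ?_ (treeRank_le_embIndex hK)
    rw [treeRank]
    split_ifs with hwf
    · let root : embTree x Y K := ⟨[], nil_mem_embTree K⟩
      exact WithTop.coe_le_coe.2 <|
        (hrank hwf root (nil_mem_embTree 1)).trans <| (Order.le_succ _).trans <|
          Ordinal.le_iSup (fun s : embTree x Y K => Order.succ (hwf.apply s).rank) root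
    · exact le_top
  induction h : embIndex x Y with
  | top => exact le_top
  | coe o =>
    simp only [h, WithTop.coe_le_coe] at hmul ⊢
    rw [Ordinal.mul_le_iff_of_isSuccLimit Ordinal.isSuccLimit_omega0]
    intro β hβ
    obtain ⟨m, rfl⟩ := Ordinal.lt_omega0.1 hβ
    exact hmul m

end LowerBound

section Minimality

lemma norm_add_le_of_norm_le_mul {E E' : Type*} [SeminormedAddCommGroup E]
    [SeminormedAddCommGroup E'] {c K C : ℝ} (hc : 0 ≤ c) (hK : 0 ≤ K) {f w : E} {f' w' : E'}
    (hf : ‖f‖ ≤ c * ‖f'‖) (hw : ‖w‖ ≤ K * ‖w'‖) (hf' : ‖f'‖ ≤ C * ‖f' + w'‖) :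
    ‖f + w‖ ≤ (c * C + K * (1 + C)) * ‖f' + w'‖ := by
  have hw' : ‖w'‖ ≤ (1 + C) * ‖f' + w'‖ := by
    linarith [norm_le_add_norm_add' f' w']
  calc ‖f + w‖ ≤ c * ‖f'‖ + K * ‖w'‖ := norm_add_le_of_le hf hw
    _ ≤ c * (C * ‖f' + w'‖) + K * ((1 + C) * ‖f' + w'‖) := by gcongr
    _ = (c * C + K * (1 + C)) * ‖f' + w'‖ := by ring

variable {c K C : ℝ} {z : ℕ → 𝒲} {Y : Submodule ℝ 𝒲}

lemma SeqEquiv.piecewise {k n : ℕ} {u v : ℕ → 𝒲} (hkn : k ≤ n) (hc : 0 < c) (hK : 0 < K)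
    (hC : 0 ≤ C) (hz : BasisConstLE ℝ C z)
    (huv : ∀ f ∈ Submodule.span ℝ (u '' Set.Iio k), ∀ w ∈ Submodule.span ℝ (Set.range v),
      ‖f‖ ≤ C * ‖f + w‖)
    (hu : SeqEquiv c k u z) (hv : SeqEquiv K n v z) :
    SeqEquiv (c * C + K * (1 + C)) n (fun i => if i < k then u i else v i) z := by
  have hpos : 0 < c * C + K * (1 + C) := by positivity
  simp only [SeqEquiv, one_div, inv_mul_le_iff₀ hc] at hu
  simp only [SeqEquiv, one_div, inv_mul_le_iff₀ hK] at hv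
  simp only [SeqEquiv, one_div, inv_mul_le_iff₀ hpos]
  intro a
  have htail (b : ℕ → 𝒲) : ∑ i ∈ Finset.range n, (if k ≤ i then a i else 0) • b i =
      ∑ i ∈ Finset.Ico k n, a i • b i := by
    simp only [ite_smul, zero_smul, ← Finset.sum_filter]
    exact Finset.sum_congr (by ext; simp [and_comm]) fun _ _ => rfl
  have hv_tail := hv fun i => if k ≤ i then a i else 0
  simp only [htail] at hv_tail
  have hsplit : ∑ i ∈ Finset.range n, a i • (if i < k then u i else v i) =
      ∑ i ∈ Finset.range k, a i • u i + ∑ i ∈ Finset.Ico k n, a i • v i := by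
    rw [← Finset.sum_range_add_sum_Ico _ hkn]
    congr 1
    · exact Finset.sum_congr rfl fun i hi => by rw [if_pos (Finset.mem_range.1 hi)]
    · exact Finset.sum_congr rfl fun i hi => by rw [if_neg (Finset.mem_Ico.1 hi).1.not_gt]
  have hz_head := hz a hkn
  rw [← Finset.sum_range_add_sum_Ico _ hkn] at hz_head
  have huv_head := huv _
    (sum_mem fun i hi => Submodule.smul_mem _ (a i)
      (Submodule.subset_span ⟨i, Finset.mem_range.1 hi, rfl⟩))
    _ (sum_mem fun i (_ : i ∈ Finset.Ico k n) => Submodule.smul_mem _ (a i)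
      (Submodule.subset_span ⟨i, rfl⟩))
  rw [hsplit, ← Finset.sum_range_add_sum_Ico (fun i => a i • z i) hkn]
  exact ⟨norm_add_le_of_norm_le_mul hc.le hK.le (hu a).1 hv_tail.1 hz_head,
    norm_add_le_of_norm_le_mul hc.le hK.le (hu a).2 hv_tail.2 huv_head⟩

lemma exists_append_mem_embTree (hz : BasisConstLE ℝ C z) (hC : 1 < C) (hK : 0 < K)
    (hY : ¬FiniteDimensional ℝ Y)
    (hE : ∀ n, ∀ Z ≤ Y, ¬FiniteDimensional ℝ Z → PrefixEmbeds K n z Z)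
    (hc : 0 < c) {l : List 𝒲} (hl : l ∈ embTree z (Y : Set 𝒲) c) (k : ℕ) :
    ∃ l' : List 𝒲, l'.length = k ∧ l ++ l' ∈ embTree z (Y : Set 𝒲) (c * C + K * (1 + C)) := by
  let u : ℕ → 𝒲 := fun i => l.getD i 0
  have := FiniteDimensional.span_of_finite ℝ ((Set.finite_Iio l.length).image u)
  obtain ⟨G, hG, hFG⟩ :=
    exists_coFG_norm_le_mul_norm_add (Submodule.span ℝ (u '' Set.Iio l.length)) hC
  obtain ⟨v, hv, hvz⟩ := hE (l.length + k) (Y ⊓ G) inf_le_left (not_finite_inf_of_coFG hY hG)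
  have hvG : Submodule.span ℝ (Set.range v) ≤ G :=
    Submodule.span_le.2 (Set.range_subset_iff.2 fun i => (hv i).2)
  refine ⟨List.ofFn fun i : Fin k => v (l.length + i), List.length_ofFn, fun w hw => ?_, ?_⟩
  · rcases List.mem_append.1 hw with hw | hw
    · exact hl.1 w hw
    · obtain ⟨i, rfl⟩ := List.mem_ofFn.1 hw
      exact (hv _).1
  · rw [List.length_append, List.length_ofFn]
    refine (SeqEquiv.piecewise (Nat.le_add_right _ k) hc hK (by linarith) hz
      (fun f hf w hw => hFG f hf w (hvG hw)) hl.2 hvz).congr_left fun i hi => ?_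
    split_ifs with hil
    · exact (List.getD_append _ _ _ _ hil).symm
    · rw [List.getD_append_right _ _ _ _ (not_lt.1 hil), List.getD_eq_getElem _ _ (by simp; omega),
        List.getElem_ofFn]
      exact congrArg v (Nat.add_sub_of_le (not_lt.1 hil)).symm

theorem isAlphaMinimal_omega0_mul_omega0 (hz : BasisConstLE ℝ C z) (hC : 1 < C) (hK : 0 < K)
    (hE : ∀ n, ∀ Z ≤ closedSpan (Set.range z), ¬FiniteDimensional ℝ Z → PrefixEmbeds K n z Z) :
    IsAlphaMinimal z (Ordinal.omega0 * Ordinal.omega0) := by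
  intro w hw Y hYz hY
  have hwE (n : ℕ) (Z : Submodule ℝ 𝒲) (hZ : Z ≤ Y) (hZ_inf : ¬FiniteDimensional ℝ Z) :
      PrefixEmbeds K n w Z :=
    PrefixEmbeds.of_mem_span hw.mem_span (fun N => hE N Z (hZ.trans hYz) hZ_inf) n
  refine omega0_mul_omega0_le_embIndex fun c hc => ⟨c * C + K * (1 + C), ?_, fun l hl =>
    exists_append_mem_embTree (hw.basisConstLE hz) hC hK hY hwE (by linarith) hl⟩
  nlinarith

end Minimality

theorem exists_omega_tight_or_omega_sq_minimal_subspace_general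
    (𝒲 : Type) [NormedAddCommGroup 𝒲] [NormedSpace ℝ 𝒲] (hinf : ¬FiniteDimensional ℝ 𝒲) :
    ∃ e : ℕ → 𝒲, IsBasicSeq e ∧ (∀ n, e n ≠ 0) ∧
      ¬FiniteDimensional ℝ (closedSpan (Set.range e)) ∧
      (IsAlphaTight e Ordinal.omega0 ∨
        IsAlphaMinimal e (Ordinal.omega0 * Ordinal.omega0)) := by
  obtain ⟨x, hx_norm, hx, hx_stable⟩ := exists_basisConstLE_stabilizing_prefixEmbeds hinf
  have hx_ne (n : ℕ) : x n ≠ 0 := ne_zero_of_norm_ne_zero (by simp [hx_norm n])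
  by_cases H : ∀ y, IsBlockSeq x y → ∀ K : ℕ, 0 < K →
      ∃ N n, ¬PrefixEmbeds K n y (closedSpan (x '' Set.Ici N))
  · exact ⟨x, hx.isBasicSeq hx_ne, hx_ne, hx.not_finiteDimensional_closedSpan hx_ne,
      Or.inl (isAlphaTight_omega0 hx hx_norm H)⟩
  · push Not at H
    obtain ⟨y, hy, K, hK, hy_tail⟩ := H
    have hy_basis : BasisConstLE ℝ 2 y := hy.basisConstLE hx
    have hyx (n : ℕ) : y n ∈ closedSpan (Set.range x) := span_le_closedSpan _ (hy.mem_span n)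
    have hyx_le : closedSpan (Set.range y) ≤ closedSpan (Set.range x) :=
      closedSpan_le (isClosed_closedSpan _) (Set.range_subset_iff.2 hyx)
    exact ⟨y, hy_basis.isBasicSeq hy.1, hy.1, hy_basis.not_finiteDimensional_closedSpan hy.1,
      Or.inr <| isAlphaMinimal_omega0_mul_omega0 hy_basis one_lt_two (K := 8 * K) (by positivity)
        fun n Z hZ hZ_inf => hx_stable y hyx (hy_basis.linearIndependent hy.1) K hK n
          (fun N => hy_tail N n) Z (hZ.trans hyx_le) hZ_inf⟩

/-- Every infinite-dimensional Banach space contains an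
infinite-dimensional closed subspace with a Schauder basis `(e n)` such that `[e n]` is
either `ω`-tight or `ω²`-minimal. -/
theorem exists_omega_tight_or_omega_sq_minimal_subspace
    (𝒲 : Type) [NormedAddCommGroup 𝒲] [NormedSpace ℝ 𝒲] [CompleteSpace 𝒲]
    (hinf : ¬FiniteDimensional ℝ 𝒲) :
    ∃ e : ℕ → 𝒲, IsBasicSeq e ∧ (∀ n, e n ≠ 0) ∧
      ¬FiniteDimensional ℝ (closedSpan (Set.range e)) ∧
      (IsAlphaTight e Ordinal.omega0 ∨
        IsAlphaMinimal e (Ordinal.omega0 * Ordinal.omega0)) :=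
  exists_omega_tight_or_omega_sq_minimal_subspace_general 𝒲 hinf

end Rosendal
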